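/- Let x > 0 and let s ∈ ℂ with Re(s) > 1/2. Then ∑_{n=1}^∞ ((2n−1)² + x²)^{−s} = (√π·x^{1−2s}/(4Γ(s)))·Γ(s − 1/2) + (2^{1/2−s}·x^{1/2−s}·π^s/Γ(s))·∑_{m=1}^∞ (−1)^m·m^{s−1/2}·K_{s−1/2}(πxm). -/

import Mathlib

/-!
Write `((2n-1)² + x²)^(-s) Γ(s)` as the Gamma integral of `u^(s-1) exp (-((2n-1)² + x²) u)` over
`u > 0` and sum over `n` under the integral (`hasSum_odd`). Poisson summation turns the theta series
`∑ exp (-(2n-1)² u)` into `√π / (4 √u) · ∑_{m ∈ ℤ} (-1)^m exp (-(π m / 2)² / u)` (`theta_odd`), and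
the new series may again be integrated term by term (`hasSum_dual`), because `Re s > 1/2`.
The term `m = 0` is a Gamma integral and gives `Γ(s - 1/2)`. The terms `±m` with `m > 0` give
`∫ u^(s-3/2) exp (-x² u - (π m / 2)² / u) du`, a multiple of `K_{s-1/2}(π x m)`.

Identifying that last integral with the representation defining `besselK` is the analytic core
(`integral_exp_mul_sq_sub_one_cpow`). It rests on the closed form of the `K_{1/2}` integral
(`integral_rpow_mul_exp_neg_add_div`), which follows from a Gaussian integral by the
Cauchy–Schlömilch substitution `y = a w - c / w`.
-/

/-- The modified Bessel function of the second kind `K_ν(z)` for real `z > 0` and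
complex order `ν` with `Re ν > -1/2`, defined by its standard integral representation. -/
noncomputable def besselK (ν : ℂ) (z : ℝ) : ℂ :=
  (Real.sqrt Real.pi : ℂ) * ((z / 2 : ℝ) : ℂ) ^ ν / Complex.Gamma (ν + 1 / 2) *
    ∫ t in Set.Ioi (1 : ℝ), Complex.exp (-(z * t)) * ((t ^ 2 - 1 : ℝ) : ℂ) ^ (ν - 1 / 2)

open MeasureTheory Set

/-! ### The closed form of the `K_{1/2}` integral -/

/-- Cauchy–Schlömilch substitution. The reflection `w ↦ c / (a w)` shows that twice `a` times the
integral is the integral against `(a + c / w²) dw = dy` for `y = a w - c / w`, which is the full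
Gaussian integral. -/
lemma integral_exp_neg_sq_sub_div {a c : ℝ} (ha : 0 < a) (hc : 0 < c) :
    ∫ w in Ioi (0 : ℝ), Real.exp (-(a * w - c / w) ^ 2) = √Real.pi / (2 * a) := by
  set E : ℝ → ℝ := fun w => Real.exp (-(a * w - c / w) ^ 2) with hE
  have hd : ∀ w ∈ Ioi (0 : ℝ),
      HasDerivWithinAt (fun w => a * w - c / w) (a + c / w ^ 2) (Ioi 0) w := by
    intro w hw
    have hw : w ≠ 0 := (ne_of_gt hw)
    have := ((hasDerivAt_id w).const_mul a).sub ((hasDerivAt_inv hw).const_mul c)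
    refine (this.congr_deriv ?_).hasDerivWithinAt.congr_of_mem ?_ ?_
    · field_simp; ring
    · intro y _; simp [div_eq_mul_inv]
    · assumption
  have hinj : InjOn (fun w => a * w - c / w) (Ioi (0 : ℝ)) := by
    intro p hp q hq h
    have hp : 0 < p := hp
    have hq : 0 < q := hq
    have h : a * p - c / p = a * q - c / q := h
    have h2 : (p - q) * (a + c / (p * q)) = 0 := by
      have : (p - q) * (a + c / (p * q)) = (a * p - c / p) - (a * q - c / q) := by
        field_simp; ring
      rw [this, h, sub_self]
    rcases mul_eq_zero.mp h2 with h3 | h3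
    · linarith
    · have : 0 < a + c / (p * q) := by positivity
      linarith
  have himg : (fun w => a * w - c / w) '' Ioi (0 : ℝ) = univ := by
    refine eq_univ_of_forall fun y => ?_
    have hs : |y| < √(y ^ 2 + 4 * a * c) := by
      rw [← Real.sqrt_sq_eq_abs]
      exact Real.sqrt_lt_sqrt (sq_nonneg y) (by nlinarith [mul_pos ha hc])
    have hsq : √(y ^ 2 + 4 * a * c) ^ 2 = y ^ 2 + 4 * a * c := Real.sq_sqrt (by positivity)
    have hpos : 0 < y + √(y ^ 2 + 4 * a * c) := by linarith [neg_abs_le y]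
    refine ⟨(y + √(y ^ 2 + 4 * a * c)) / (2 * a), div_pos hpos (by positivity), ?_⟩
    have hne := hpos.ne'
    set q := √(y ^ 2 + 4 * a * c)
    have h1 : a * ((y + q) / (2 * a)) = (y + q) / 2 := by field_simp
    have h2 : c / ((y + q) / (2 * a)) = (q - y) / 2 := by
      rw [div_div_eq_mul_div, div_eq_iff hne]
      linear_combination -hsq / 2
    change a * ((y + q) / (2 * a)) - c / ((y + q) / (2 * a)) = y
    rw [h1, h2]
    ring
  have hg : Integrable (fun y : ℝ => Real.exp (-y ^ 2)) := by
    simpa using integrable_exp_neg_mul_sq (b := 1) one_pos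
  have hI : IntegrableOn (fun w => |a + c / w ^ 2| • E w) (Ioi 0) := by
    have := (integrableOn_image_iff_integrableOn_abs_deriv_smul measurableSet_Ioi hd hinj
      (fun y => Real.exp (-y ^ 2))).mp (by rw [himg]; exact hg.integrableOn)
    exact this
  have hV : ∫ w in Ioi (0 : ℝ), |a + c / w ^ 2| • E w = √Real.pi := by
    have := integral_image_eq_integral_abs_deriv_smul measurableSet_Ioi hd hinj
      (fun y => Real.exp (-y ^ 2))
    rw [himg, Measure.restrict_univ] at this
    rw [← this]
    simpa using integral_gaussian 1
  have hm : Measurable E := by fun_prop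
  have h1 : IntegrableOn (fun w => a * E w) (Ioi 0) := by
    refine Integrable.mono' hI (by fun_prop) ?_
    refine (ae_restrict_iff' measurableSet_Ioi).mpr (.of_forall fun w hw => ?_)
    have hw : 0 < w := hw
    have hE0 : 0 < E w := Real.exp_pos _
    rw [Real.norm_of_nonneg (by positivity), abs_of_pos (by positivity), smul_eq_mul]
    gcongr
    have : 0 < c / w ^ 2 := by positivity
    linarith
  have h2 : IntegrableOn (fun w => c / w ^ 2 * E w) (Ioi 0) := by
    refine Integrable.mono' hI (by fun_prop) ?_
    refine (ae_restrict_iff' measurableSet_Ioi).mpr (.of_forall fun w hw => ?_)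
    have hw : 0 < w := hw
    have hE0 : 0 < E w := Real.exp_pos _
    rw [Real.norm_of_nonneg (by positivity), abs_of_pos (by positivity), smul_eq_mul]
    gcongr
    linarith
  -- The reflection `w ↦ c / (a w)` preserves the exponent.
  have hrefl : ∫ w in Ioi (0 : ℝ), E w = ∫ w in Ioi (0 : ℝ), c / (a * w ^ 2) * E w := by
    have hd' : ∀ w ∈ Ioi (0 : ℝ),
        HasDerivWithinAt (fun w => c / a * w⁻¹) (c / a * -(w ^ 2)⁻¹) (Ioi 0) w := fun w hw =>
      ((hasDerivAt_inv (ne_of_gt hw)).const_mul _).hasDerivWithinAt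
    have hinj' : InjOn (fun w => c / a * w⁻¹) (Ioi (0 : ℝ)) := by
      intro p _ q _ h
      exact inv_injective (mul_left_cancel₀ (by positivity) h)
    have himg' : (fun w => c / a * w⁻¹) '' Ioi (0 : ℝ) = Ioi 0 := by
      ext y
      constructor
      · rintro ⟨w, hw, rfl⟩
        have hw : 0 < w := hw
        exact mem_Ioi.mpr (by positivity)
      · intro hy
        have hy : 0 < y := hy
        exact ⟨c / a * y⁻¹, mem_Ioi.mpr (by positivity), by field_simp⟩
    have := integral_image_eq_integral_abs_deriv_smul measurableSet_Ioi hd' hinj' E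
    rw [himg'] at this
    rw [this]
    refine setIntegral_congr_fun measurableSet_Ioi fun w hw => ?_
    have hw : 0 < w := hw
    simp only [smul_eq_mul, hE]
    rw [mul_neg, abs_neg, abs_of_pos (by positivity)]
    congr 1
    · field_simp
    · congr 2
      field_simp
      ring
  have hsum : ∫ w in Ioi (0 : ℝ), |a + c / w ^ 2| • E w =
      (∫ w in Ioi (0 : ℝ), a * E w) + ∫ w in Ioi (0 : ℝ), c / w ^ 2 * E w := by
    rw [← integral_add h1 h2]
    refine setIntegral_congr_fun measurableSet_Ioi fun w hw => ?_
    have hw : 0 < w := hw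
    simp only [smul_eq_mul]
    rw [abs_of_pos (by positivity)]
    ring
  have h3 : ∫ w in Ioi (0 : ℝ), c / w ^ 2 * E w = a * ∫ w in Ioi (0 : ℝ), E w := by
    rw [hrefl, ← integral_const_mul]
    refine setIntegral_congr_fun measurableSet_Ioi fun w hw => ?_
    have hw : 0 < w := hw
    field_simp
  rw [hV, h3, integral_const_mul] at hsum
  rw [hsum]
  field_simp
  ring

/-- The half-integer Bessel integral: `exp (-2Cx)` as a mixture of the functions
`exp (-C² / u)`. -/
lemma integral_rpow_mul_exp_neg_add_div {x C : ℝ} (hx : 0 < x) (hC : 0 < C) :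
    ∫ u in Ioi (0 : ℝ), u ^ (-(3 / 2) : ℝ) * Real.exp (-(x ^ 2 * u + C ^ 2 / u)) =
      √Real.pi / C * Real.exp (-(2 * C * x)) := by
  rw [← integral_comp_rpow_Ioi _ (p := -2) (by norm_num)]
  have : ∀ w ∈ Ioi (0 : ℝ), (|(-2 : ℝ)| * w ^ ((-2 : ℝ) - 1)) •
      ((w ^ (-2 : ℝ)) ^ (-(3 / 2) : ℝ) *
        Real.exp (-(x ^ 2 * w ^ (-2 : ℝ) + C ^ 2 / w ^ (-2 : ℝ)))) =
      2 * Real.exp (-(2 * C * x)) * Real.exp (-(C * w - x / w) ^ 2) := by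
    intro w hw
    have hw : 0 < w := hw
    rw [← Real.rpow_mul hw.le, smul_eq_mul, ← mul_assoc, mul_assoc |(-2 : ℝ)|,
      ← Real.rpow_add hw, mul_assoc 2, ← Real.exp_add]
    have e : w ^ (-2 : ℝ) = (w ^ 2)⁻¹ := by
      rw [Real.rpow_neg hw.le]; norm_cast
    rw [e]
    norm_num
    field_simp
    ring
  rw [setIntegral_congr_fun measurableSet_Ioi this, integral_const_mul,
    integral_exp_neg_sq_sub_div hC hx]
  field_simp

/-! ### Gamma integrals and the Bessel integral -/

lemma integrableOn_rpow_mul_exp_neg_add_div {σ b : ℝ} (B : ℝ) (hσ : 1 / 2 < σ) (hb : 0 < b) :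
    IntegrableOn (fun u : ℝ => u ^ (σ - 3 / 2) * Real.exp (-(b * u + B ^ 2 / u))) (Ioi 0) := by
  have h := integrableOn_rpow_mul_exp_neg_mul_rpow (p := 1) (s := σ - 3 / 2) (b := b)
    (by linarith) one_pos hb
  refine Integrable.mono' h (by fun_prop) ?_
  refine (ae_restrict_iff' measurableSet_Ioi).mpr (.of_forall fun u hu => ?_)
  have hu : 0 < u := hu
  rw [Real.norm_of_nonneg (by positivity), Real.rpow_one]
  gcongr
  have : 0 ≤ B ^ 2 / u := by positivity
  linarith

lemma norm_cpow_mul_ofReal {u r : ℝ} (hu : 0 < u) (hr : 0 ≤ r) (z : ℂ) :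
    ‖(u : ℂ) ^ z * (r : ℂ)‖ = u ^ z.re * r := by
  rw [norm_mul, Complex.norm_cpow_eq_rpow_re_of_pos hu, Complex.norm_real, Real.norm_of_nonneg hr]

lemma integrableOn_cpow_mul_exp {s : ℂ} {b : ℝ} (hs : 0 < s.re) (hb : 0 < b) :
    IntegrableOn (fun u : ℝ => (u : ℂ) ^ (s - 1) * (Real.exp (-(b * u)) : ℂ)) (Ioi 0) := by
  have h := integrableOn_rpow_mul_exp_neg_mul_rpow (p := 1) (s := s.re - 1) (b := b)
    (by linarith) one_pos hb
  refine Integrable.mono' h (by fun_prop) ?_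
  refine (ae_restrict_iff' measurableSet_Ioi).mpr (.of_forall fun u hu => ?_)
  rw [norm_cpow_mul_ofReal hu (Real.exp_pos _).le]
  simp

lemma integral_norm_cpow_mul_exp {s : ℂ} {b : ℝ} (hs : 0 < s.re) (hb : 0 < b) :
    ∫ u in Ioi (0 : ℝ), ‖(u : ℂ) ^ (s - 1) * (Real.exp (-(b * u)) : ℂ)‖ =
      (1 / b) ^ s.re * Real.Gamma s.re := by
  rw [← Real.integral_rpow_mul_exp_neg_mul_Ioi hs hb]
  refine setIntegral_congr_fun measurableSet_Ioi fun u hu => ?_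
  rw [norm_cpow_mul_ofReal hu (Real.exp_pos _).le]
  simp

lemma integral_cpow_mul_exp {s : ℂ} {b : ℝ} (hs : 0 < s.re) (hb : 0 < b) :
    ∫ u in Ioi (0 : ℝ), (u : ℂ) ^ (s - 1) * (Real.exp (-(b * u)) : ℂ) =
      (1 / (b : ℂ)) ^ s * Complex.Gamma s := by
  rw [← Complex.integral_cpow_mul_exp_neg_mul_Ioi hs hb]
  refine setIntegral_congr_fun measurableSet_Ioi fun u hu => ?_
  simp

/-- The integral defining `besselK`, rewritten as an integral over the heat parameter `u`.
After `t = √(1 + p)`, the factor `exp (-2 B x t) / t` is expanded by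
`integral_rpow_mul_exp_neg_add_div`; exchanging the integrals leaves a Gamma integral in `p`. -/
lemma integral_exp_mul_sq_sub_one_cpow {B x : ℝ} (hB : 0 < B) (hx : 0 < x) {s : ℂ}
    (hs : 1 / 2 < s.re) :
    ∫ t in Ioi (1 : ℝ), Complex.exp (-(((2 * B * x : ℝ) : ℂ) * t)) *
        ((t ^ 2 - 1 : ℝ) : ℂ) ^ (s - 1) =
      (B : ℂ) / (2 * (√Real.pi : ℂ)) * (1 / ((B ^ 2 : ℝ) : ℂ)) ^ s * Complex.Gamma s *
        ∫ u in Ioi (0 : ℝ), (u : ℂ) ^ (s - 3 / 2) *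
          (Real.exp (-(x ^ 2 * u + B ^ 2 / u)) : ℂ) := by
  have hBC : (B : ℂ) ≠ 0 := by exact_mod_cast hB.ne'
  have hs0 : 0 < s.re := by linarith
  have hpi : 0 < √Real.pi := Real.sqrt_pos.mpr Real.pi_pos
  have hpiC : (√Real.pi : ℂ) ≠ 0 := by
    rw [Ne, Complex.ofReal_eq_zero]
    exact ne_of_gt hpi
  -- Substitute `t = √(1 + p)`.
  have hd : ∀ p ∈ Ioi (0 : ℝ),
      HasDerivWithinAt (fun p => √(1 + p)) (1 / (2 * √(1 + p))) (Ioi 0) p := by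
    intro p hp
    have hp : 0 < p := hp
    exact (((hasDerivAt_id p).const_add 1).sqrt (by simp only [id]; positivity)).hasDerivWithinAt
  have hinj : InjOn (fun p => √(1 + p)) (Ioi (0 : ℝ)) := by
    intro p hp q hq h
    have hp : 0 < p := hp
    have hq : 0 < q := hq
    have := (Real.sqrt_inj (by positivity) (by positivity)).mp h
    linarith
  have himg : (fun p => √(1 + p)) '' Ioi (0 : ℝ) = Ioi 1 := by
    ext y
    constructor
    · rintro ⟨p, hp, rfl⟩
      have hp : 0 < p := hp
      exact Real.lt_sqrt_of_sq_lt (by linarith)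
    · intro hy
      have hy : 1 < y := hy
      refine ⟨y ^ 2 - 1, mem_Ioi.mpr (by nlinarith), ?_⟩
      simp only [add_sub_cancel]
      exact Real.sqrt_sq (by linarith)
  rw [← himg, integral_image_eq_integral_abs_deriv_smul measurableSet_Ioi hd hinj]
  set F : ℝ → ℝ → ℂ := fun p u => (p : ℂ) ^ (s - 1) *
    ((u ^ (-(3 / 2) : ℝ) * Real.exp (-(x ^ 2 * u + (B * √(1 + p)) ^ 2 / u)) : ℝ) : ℂ) with hF
  have hinner : ∀ p ∈ Ioi (0 : ℝ), |1 / (2 * √(1 + p))| •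
      (Complex.exp (-(((2 * B * x : ℝ) : ℂ) * (√(1 + p) : ℝ))) *
        ((√(1 + p) ^ 2 - 1 : ℝ) : ℂ) ^ (s - 1)) =
      (B : ℂ) / (2 * (√Real.pi : ℂ)) * ∫ u in Ioi (0 : ℝ), F p u := by
    intro p hp
    have hp : 0 < p := hp
    have hq : 0 < √(1 + p) := Real.sqrt_pos.mpr (by linarith)
    have hqC : (√(1 + p) : ℂ) ≠ 0 := by exact_mod_cast hq.ne'
    simp only [hF]
    rw [integral_const_mul, integral_complex_ofReal,
      integral_rpow_mul_exp_neg_add_div hx (mul_pos hB hq), abs_of_pos (by positivity),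
      Real.sq_sqrt (by linarith), Complex.real_smul]
    push_cast
    rw [add_sub_cancel_left,
      show (2 * (B : ℂ) * x * (√(1 + p) : ℝ)) = 2 * ((B : ℂ) * (√(1 + p) : ℝ)) * x by ring]
    field_simp
  -- The inner integral in the other order is a Gamma integral.
  have hFu : ∀ p ∈ Ioi (0 : ℝ), ∀ u ∈ Ioi (0 : ℝ), F p u =
      ((p : ℂ) ^ (s - 1) * (Real.exp (-(B ^ 2 / u * p)) : ℂ)) *
        ((u ^ (-(3 / 2) : ℝ) * Real.exp (-(x ^ 2 * u + B ^ 2 / u)) : ℝ) : ℂ) := by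
    intro p hp u hu
    have hp : 0 < p := hp
    have hu : 0 < u := hu
    simp only [hF]
    rw [mul_assoc, ← Complex.ofReal_mul]
    congr 2
    rw [mul_left_comm, ← Real.exp_add, mul_pow, Real.sq_sqrt (by linarith)]
    congr 2
    ring
  have hint : Integrable (Function.uncurry F)
      ((volume.restrict (Ioi 0)).prod (volume.restrict (Ioi 0))) := by
    have hmeas : Measurable (Function.uncurry F) := by
      simp only [hF, Function.uncurry_def]; fun_prop
    rw [integrable_prod_iff' hmeas.aestronglyMeasurable]
    constructor
    · refine (ae_restrict_iff' measurableSet_Ioi).mpr (.of_forall fun u hu => ?_)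
      have hu' : 0 < u := hu
      have := (integrableOn_cpow_mul_exp (b := B ^ 2 / u) hs0 (by positivity)).mul_const
        ((u ^ (-(3 / 2) : ℝ) * Real.exp (-(x ^ 2 * u + B ^ 2 / u)) : ℝ) : ℂ)
      exact IntegrableOn.congr_fun this (fun p hp => (hFu p hp u hu).symm) measurableSet_Ioi
    · have h := (integrableOn_rpow_mul_exp_neg_add_div B hs (pow_pos hx 2)).const_mul
        ((1 / B ^ 2) ^ s.re * Real.Gamma s.re)
      refine IntegrableOn.congr_fun h (fun u hu => ?_) measurableSet_Ioi
      have hu' : 0 < u := hu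
      simp only [Function.uncurry_apply_pair]
      rw [setIntegral_congr_fun measurableSet_Ioi (fun p hp => by
        rw [hFu p hp u hu, norm_mul, Complex.norm_real, Real.norm_of_nonneg (by positivity)])]
      rw [integral_mul_const, integral_norm_cpow_mul_exp hs0 (by positivity),
        show 1 / (B ^ 2 / u) = 1 / B ^ 2 * u by field_simp,
        Real.mul_rpow (by positivity) hu'.le, show s.re - 3 / 2 = s.re + -(3 / 2) by ring,
        Real.rpow_add hu']
      ring
  rw [setIntegral_congr_fun measurableSet_Ioi hinner, integral_const_mul,
    integral_integral_swap hint, mul_assoc, mul_assoc]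
  congr 1
  rw [← mul_assoc, ← integral_const_mul]
  refine setIntegral_congr_fun measurableSet_Ioi fun u hu => ?_
  have hu' : 0 < u := hu
  have huC : (u : ℂ) ≠ 0 := by exact_mod_cast hu'.ne'
  rw [setIntegral_congr_fun measurableSet_Ioi (fun p hp => hFu p hp u hu), integral_mul_const,
    integral_cpow_mul_exp hs0 (by positivity)]
  have e1 : (1 / ((B ^ 2 / u : ℝ) : ℂ)) = ((1 / B ^ 2 : ℝ) : ℂ) * (u : ℂ) := by
    push_cast; field_simp
  have e2 : (1 / ((B ^ 2 : ℝ) : ℂ)) = ((1 / B ^ 2 : ℝ) : ℂ) := by push_cast; rfl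
  have e3 : (u : ℂ) ^ (s - 3 / 2) = (u : ℂ) ^ s * ((u ^ (-(3 / 2) : ℝ) : ℝ) : ℂ) := by
    rw [sub_eq_add_neg, Complex.cpow_add _ _ huC, Complex.ofReal_cpow hu'.le]
    push_cast; rfl
  rw [e1, e2, e3, Complex.mul_cpow_ofReal_nonneg (by positivity) hu'.le, Complex.ofReal_mul]
  ring

/-! ### The theta transformation -/

/-- Poisson summation for the theta series over the odd integers; the shift by a half period
produces the signs `(-1) ^ m`. -/
lemma theta_odd {u : ℝ} (hu : 0 < u) :
    ∑' n : ℕ, (Real.exp (-((2 * n + 1) ^ 2 * u)) : ℂ) =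
      (√Real.pi : ℂ) / 4 * (u : ℂ) ^ (-(1 / 2) : ℂ) *
        ∑' m : ℤ, (-1 : ℂ) ^ m * (Real.exp (-((Real.pi * m / 2) ^ 2 / u)) : ℂ) := by
  have hpi := Real.pi_pos
  have hre : 0 < ((Real.pi / (4 * u) : ℝ) : ℂ).re := by
    rw [Complex.ofReal_re]; positivity
  have key := Complex.tsum_exp_neg_quadratic hre (-(Complex.I / 2))
  have hL : ∀ n : ℤ, Complex.exp (-Real.pi * ((Real.pi / (4 * u) : ℝ) : ℂ) * (n : ℂ) ^ 2 +
      2 * Real.pi * (-(Complex.I / 2)) * n) =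
      (-1 : ℂ) ^ n * (Real.exp (-((Real.pi * n / 2) ^ 2 / u)) : ℂ) := by
    intro n
    rw [Complex.exp_add, mul_comm, Complex.ofReal_exp]
    congr 1
    · rw [← Complex.exp_neg_pi_mul_I, ← Complex.exp_int_mul]
      congr 1; ring
    · congr 1; push_cast; field_simp; ring
  have hR : ∀ n : ℤ, Complex.exp (-Real.pi / ((Real.pi / (4 * u) : ℝ) : ℂ) *
      ((n : ℂ) + Complex.I * (-(Complex.I / 2))) ^ 2) =
      (Real.exp (-((2 * n + 1) ^ 2 * u)) : ℂ) := by
    intro n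
    have : (n : ℂ) + Complex.I * (-(Complex.I / 2)) = n + 1 / 2 := by
      linear_combination (-1 / 2 : ℂ) * Complex.I_sq
    rw [this, Complex.ofReal_exp]
    have hu' : (u : ℂ) ≠ 0 := by exact_mod_cast hu.ne'
    have hpi' : (Real.pi : ℂ) ≠ 0 := by exact_mod_cast hpi.ne'
    congr 1; push_cast; field_simp; ring
  simp_rw [hL, hR] at key
  have hgeo : ∀ c : ℝ, 0 < c → Summable fun n : ℕ => Real.exp (-c) ^ n := fun c hc =>
    summable_geometric_of_lt_one (Real.exp_pos _).le (by simpa using hc)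
  have s1 : Summable fun n : ℕ => (Real.exp (-((2 * n + 1) ^ 2 * u)) : ℂ) := by
    refine Summable.of_norm_bounded (hgeo u hu) fun n => ?_
    rw [Complex.norm_real, Real.norm_of_nonneg (Real.exp_pos _).le, ← Real.exp_nat_mul]
    gcongr
    have : (0 : ℝ) ≤ n := n.cast_nonneg
    have h : (n : ℝ) ≤ (2 * n + 1) ^ 2 := by nlinarith
    linarith [mul_le_mul_of_nonneg_right h hu.le]
  have eN : ∀ n : ℕ, (Real.exp (-((2 * ((-((n : ℤ) + 1) : ℤ) : ℝ) + 1) ^ 2 * u)) : ℂ) =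
      (Real.exp (-((2 * n + 1) ^ 2 * u)) : ℂ) := by
    intro n; congr 3; push_cast; ring
  rw [tsum_of_nat_of_neg_add_one
    (f := fun n : ℤ => (Real.exp (-((2 * n + 1) ^ 2 * u)) : ℂ)) (by simpa using s1) (by simpa only [eN] using s1)] at key
  simp_rw [eN, Int.cast_natCast] at key
  have ha : ((Real.pi / (4 * u) : ℝ) : ℂ) ^ (1 / 2 : ℂ) =
      (√Real.pi : ℂ) / 2 * (u : ℂ) ^ (-(1 / 2) : ℂ) := by
    have : (-(1 / 2) : ℂ) = ((-(1 / 2) : ℝ) : ℂ) := by push_cast; rfl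
    rw [this, ← Complex.ofReal_cpow hu.le]
    have : (1 / 2 : ℂ) = ((1 / 2 : ℝ) : ℂ) := by push_cast; rfl
    rw [this, ← Complex.ofReal_cpow (by positivity), ← Real.sqrt_eq_rpow, Real.rpow_neg hu.le,
      ← Real.sqrt_eq_rpow, Real.sqrt_div hpi.le, Real.sqrt_mul (by norm_num),
      show (4 : ℝ) = 2 ^ 2 by norm_num, Real.sqrt_sq (by norm_num)]
    push_cast
    field_simp
  have ha0 : ((Real.pi / (4 * u) : ℝ) : ℂ) ^ (1 / 2 : ℂ) ≠ 0 := by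
    rw [Ne, Complex.cpow_eq_zero_iff, not_and_or]
    left
    exact_mod_cast (by positivity : Real.pi / (4 * u) ≠ 0)
  rw [one_div, eq_comm, inv_mul_eq_iff_eq_mul₀ ha0, ha] at key
  linear_combination key / 2

/-! ### Exchanging sums and integrals -/

/-- The left-hand side times `Γ(s)`, as the Mellin-type integral of the theta series. -/
lemma hasSum_odd {x : ℝ} (hx : 0 < x) {s : ℂ} (hs : 1 / 2 < s.re) :
    HasSum (fun n : ℕ => (((2 * (n + 1) - 1 : ℝ) ^ 2 + x ^ 2 : ℝ) : ℂ) ^ (-s) * Complex.Gamma s)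
      (∫ u in Ioi (0 : ℝ), (u : ℂ) ^ (s - 1) * (Real.exp (-(x ^ 2 * u)) : ℂ) *
        ∑' n : ℕ, (Real.exp (-((2 * n + 1) ^ 2 * u)) : ℂ)) := by
  have hs0 : 0 < s.re := by linarith
  have ha : ∀ n : ℕ, 0 < (2 * (n + 1) - 1 : ℝ) ^ 2 + x ^ 2 := fun n => by positivity
  set F : ℕ → ℝ → ℂ := fun n u => (u : ℂ) ^ (s - 1) *
    (Real.exp (-(((2 * (n + 1) - 1 : ℝ) ^ 2 + x ^ 2) * u)) : ℂ) with hF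
  have hsum : Summable fun n : ℕ => ∫ u in Ioi (0 : ℝ), ‖F n u‖ := by
    simp only [hF]
    simp_rw [fun n : ℕ => integral_norm_cpow_mul_exp hs0 (ha n)]
    refine Summable.mul_right _ ?_
    have h := (summable_nat_add_iff 1).mpr
      (Real.summable_nat_rpow_inv.mpr (by linarith : 1 < 2 * s.re))
    refine Summable.of_nonneg_of_le (fun n => by have := ha n; positivity) (fun n => ?_) h
    have hn : (0 : ℝ) ≤ n := n.cast_nonneg
    have := ha n
    rw [one_div, Real.inv_rpow (ha n).le, Real.rpow_mul (by positivity)]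
    push_cast
    gcongr
    rw [Real.rpow_two]
    nlinarith [sq_nonneg x]
  have key := hasSum_integral_of_summable_integral_norm
    (fun n => integrableOn_cpow_mul_exp hs0 (ha n)) hsum
  have hterm : ∀ n : ℕ, ∫ u in Ioi (0 : ℝ), F n u =
      (((2 * (n + 1) - 1 : ℝ) ^ 2 + x ^ 2 : ℝ) : ℂ) ^ (-s) * Complex.Gamma s := by
    intro n
    have hne : (((2 * (n + 1) - 1 : ℝ) ^ 2 + x ^ 2 : ℝ) : ℂ).arg ≠ Real.pi := by
      rw [Complex.arg_ofReal_of_nonneg (ha n).le]; exact Real.pi_pos.ne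
    rw [hF, integral_cpow_mul_exp hs0 (ha n), Complex.cpow_neg, one_div,
      Complex.inv_cpow _ _ hne]
  have hval : ∫ u in Ioi (0 : ℝ), ∑' n : ℕ, F n u =
      ∫ u in Ioi (0 : ℝ), (u : ℂ) ^ (s - 1) * (Real.exp (-(x ^ 2 * u)) : ℂ) *
        ∑' n : ℕ, (Real.exp (-((2 * n + 1) ^ 2 * u)) : ℂ) := by
    refine setIntegral_congr_fun measurableSet_Ioi fun u hu => ?_
    simp only [hF]
    rw [← tsum_mul_left]
    refine tsum_congr fun n => ?_
    rw [mul_assoc, ← Complex.ofReal_mul, ← Real.exp_add]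
    congr 3
    ring
  rw [← hval]
  simpa only [← hterm] using key

/-- Termwise integration of the Poisson-dual series. The integral of the norm of the `m`-th term
is at most a constant times `exp (-x |m|)`. -/
lemma hasSum_dual {x : ℝ} (hx : 0 < x) {s : ℂ} (hs : 1 / 2 < s.re) :
    HasSum (fun m : ℤ => ∫ u in Ioi (0 : ℝ), (-1 : ℂ) ^ m * ((u : ℂ) ^ (s - 3 / 2) *
        (Real.exp (-(x ^ 2 * u + (Real.pi * m / 2) ^ 2 / u)) : ℂ)))
      (∫ u in Ioi (0 : ℝ), ∑' m : ℤ, (-1 : ℂ) ^ m * ((u : ℂ) ^ (s - 3 / 2) *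
        (Real.exp (-(x ^ 2 * u + (Real.pi * m / 2) ^ 2 / u)) : ℂ))) := by
  have hre : (s - 3 / 2).re = s.re - 3 / 2 := by
    rw [Complex.sub_re]; norm_num
  have hnorm : ∀ m : ℤ, ∀ u ∈ Ioi (0 : ℝ), ‖(-1 : ℂ) ^ m * ((u : ℂ) ^ (s - 3 / 2) *
        (Real.exp (-(x ^ 2 * u + (Real.pi * m / 2) ^ 2 / u)) : ℂ))‖ =
      u ^ (s.re - 3 / 2) * Real.exp (-(x ^ 2 * u + (Real.pi * m / 2) ^ 2 / u)) := by
    intro m u hu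
    rw [norm_mul, norm_zpow, norm_neg, norm_one, one_zpow, one_mul,
      norm_cpow_mul_ofReal hu (Real.exp_pos _).le, hre]
  have hint := fun m : ℤ =>
    integrableOn_rpow_mul_exp_neg_add_div (Real.pi * m / 2) hs (pow_pos hx 2)
  refine hasSum_integral_of_summable_integral_norm (fun m => ?_) ?_
  · refine Integrable.mono' (hint m) (by fun_prop) ?_
    exact (ae_restrict_iff' measurableSet_Ioi).mpr
      (.of_forall fun u hu => (hnorm m u hu).le)
  · rw [summable_congr fun m : ℤ => setIntegral_congr_fun measurableSet_Ioi (hnorm m)]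
    have hI := integrableOn_rpow_mul_exp_neg_add_div 0 hs (by positivity : 0 < x ^ 2 / 2)
    have hgeo : Summable fun m : ℤ => Real.exp (-(x * |(m : ℝ)|)) := by
      have h : Summable fun n : ℕ => Real.exp (-x) ^ n :=
        summable_geometric_of_lt_one (Real.exp_pos _).le (by simpa using hx)
      have e : ∀ n : ℕ, Real.exp (-(x * (n : ℝ))) = Real.exp (-x) ^ n := fun n => by
        rw [← Real.exp_nat_mul]; congr 1; ring
      refine Summable.of_nat_of_neg ?_ ?_
      · simpa [e] using h
      · simpa [e] using h
    refine Summable.of_nonneg_of_le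
      (fun m => setIntegral_nonneg measurableSet_Ioi fun u hu => ?_) (fun m => ?_)
      (hgeo.mul_right
        (∫ u in Ioi (0 : ℝ), u ^ (s.re - 3 / 2) * Real.exp (-(x ^ 2 / 2 * u + 0 ^ 2 / u))))
    · have hu : 0 < u := hu
      positivity
    · rw [← integral_const_mul]
      refine setIntegral_mono_on (hint m) (hI.const_mul _) measurableSet_Ioi fun u hu => ?_
      have hu : 0 < u := hu
      rw [mul_left_comm, ← Real.exp_add]
      gcongr
      -- `x² u / 2 + m² / (2u) ≥ x |m|` by AM-GM, and `π² / 4 ≥ 1 / 2`.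
      have h1 : 0 ≤ (x * u - |(m : ℝ)|) ^ 2 / (2 * u) := by positivity
      have h2 : (x * u - |(m : ℝ)|) ^ 2 / (2 * u) =
          x ^ 2 / 2 * u - x * |(m : ℝ)| + (m : ℝ) ^ 2 / (2 * u) := by
        rw [sub_sq, sq_abs]; field_simp
      have h3 : (m : ℝ) ^ 2 / (2 * u) ≤ (Real.pi * m / 2) ^ 2 / u := by
        rw [div_le_div_iff₀ (by positivity) hu]
        have : (1 : ℝ) / 2 ≤ (Real.pi / 2) ^ 2 := by nlinarith [Real.pi_gt_three]
        have h4 : 0 ≤ (m : ℝ) ^ 2 * u := by positivity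
        nlinarith [mul_le_mul_of_nonneg_left this h4]
      have h5 : (0 : ℝ) ^ 2 / u = 0 := by simp
      rw [h5]
      linarith

/-! ### The Bessel terms -/

/-- Each Bessel term of the formula as an integral over the heat parameter. -/
lemma besselK_term {x : ℝ} (hx : 0 < x) {s : ℂ} (hs : 1 / 2 < s.re) (m : ℕ) :
    (2 : ℂ) ^ ((1 : ℂ) / 2 - s) * (x : ℂ) ^ ((1 : ℂ) / 2 - s) * (Real.pi : ℂ) ^ s *
        (((m + 1 : ℝ) : ℂ) ^ (s - 1 / 2) * besselK (s - 1 / 2) (Real.pi * x * (m + 1))) =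
      (√Real.pi : ℂ) / 2 * ∫ u in Ioi (0 : ℝ), (u : ℂ) ^ (s - 3 / 2) *
        (Real.exp (-(x ^ 2 * u + (Real.pi * (m + 1) / 2) ^ 2 / u)) : ℂ) := by
  have hpi := Real.pi_pos
  set M : ℝ := (m : ℝ) + 1 with hM
  have hM0 : 0 < M := by positivity
  have hΓ : Complex.Gamma s ≠ 0 := Complex.Gamma_ne_zero_of_re_pos (by linarith)
  have hB : 0 < Real.pi * M / 2 := by positivity
  have hz : Real.pi * x * M = 2 * (Real.pi * M / 2) * x := by ring
  have h2C : (2 : ℂ) ≠ 0 := two_ne_zero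
  have hxC : (x : ℂ) ≠ 0 := by exact_mod_cast hx.ne'
  have hMC : (M : ℂ) ≠ 0 := by exact_mod_cast hM0.ne'
  have hpiC : (Real.pi : ℂ) ≠ 0 := by exact_mod_cast hpi.ne'
  have hsC : (√Real.pi : ℂ) ≠ 0 := by exact_mod_cast (Real.sqrt_pos.mpr hpi).ne'
  have hsq : (√Real.pi : ℂ) = Complex.exp (Real.log Real.pi / 2) := by
    rw [← Real.exp_log (Real.sqrt_pos.mpr hpi), Real.log_sqrt hpi.le]
    push_cast; rfl
  rw [besselK, sub_add_cancel, show s - 1 / 2 - 1 / 2 = s - 1 by ring, hz,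
    integral_exp_mul_sq_sub_one_cpow hB hx hs]
  generalize (∫ u in Ioi (0 : ℝ), (u : ℂ) ^ (s - 3 / 2) *
        (Real.exp (-(x ^ 2 * u + (Real.pi * M / 2) ^ 2 / u)) : ℂ)) = J
  have hmain : (2 : ℂ) ^ ((1 : ℂ) / 2 - s) * (x : ℂ) ^ ((1 : ℂ) / 2 - s) * (Real.pi : ℂ) ^ s *
      (M : ℂ) ^ (s - 1 / 2) * ((2 * (Real.pi * M / 2) * x / 2 : ℝ) : ℂ) ^ (s - 1 / 2) *
      ((Real.pi * M / 2 : ℝ) : ℂ) * (1 / (((Real.pi * M / 2) ^ 2 : ℝ) : ℂ)) ^ s =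
      (√Real.pi : ℂ) := by
    -- All factors are exponentials of combinations of `log 2`, `log x`, `log π`, `log M`.
    have e2 : (2 : ℂ) = ((2 : ℝ) : ℂ) := by norm_num
    have e1 : (1 / (((Real.pi * M / 2) ^ 2 : ℝ) : ℂ)) = ((1 / (Real.pi * M / 2) ^ 2 : ℝ) : ℂ) := by
      push_cast; rfl
    have eP : ∀ r : ℝ, 0 < r → ∀ z : ℂ, (r : ℂ) ^ z = Complex.exp (Real.log r * z) := by
      intro r hr z
      rw [Complex.cpow_def_of_ne_zero (by exact_mod_cast hr.ne'), Complex.ofReal_log hr.le]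
    have eB : ((Real.pi * M / 2 : ℝ) : ℂ) = Complex.exp (Real.log (Real.pi * M / 2)) := by
      rw [← Complex.ofReal_exp, Real.exp_log hB]
    have e22 : (2 : ℂ) ^ ((1 : ℂ) / 2 - s) = Complex.exp (Real.log 2 * (1 / 2 - s)) := by
      rw [← eP 2 two_pos]; norm_num
    rw [e1, e22, eP x hx, eP Real.pi hpi, eP M hM0, eP _ (by positivity), eB,
      eP _ (by positivity), hsq]
    simp only [← Complex.exp_add]
    congr 1
    have l0 : Real.log (Real.pi * M / 2) = Real.log Real.pi + Real.log M - Real.log 2 := by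
      rw [Real.log_div (by positivity) two_ne_zero, Real.log_mul hpi.ne' hM0.ne']
    have l1 : Real.log (2 * (Real.pi * M / 2) * x / 2) =
        Real.log Real.pi + Real.log M - Real.log 2 + Real.log x := by
      rw [show 2 * (Real.pi * M / 2) * x / 2 = (Real.pi * M / 2) * x by ring,
        Real.log_mul hB.ne' hx.ne', l0]
    have l2 : Real.log (1 / (Real.pi * M / 2) ^ 2) =
        -(2 * (Real.log Real.pi + Real.log M - Real.log 2)) := by
      rw [one_div, Real.log_inv, Real.log_pow, l0]; push_cast; ring
    rw [l0, l1, l2]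
    push_cast
    ring
  field_simp
  field_simp at hmain
  linear_combination J * hmain

/-! ### Assembly -/

theorem watson_formula_odd_integers (x : ℝ) (hx : 0 < x) (s : ℂ) (hs : 1 / 2 < s.re) :
    (∑' n : ℕ, (((2 * (n + 1) - 1 : ℝ) ^ 2 + x ^ 2 : ℝ) : ℂ) ^ (-s)) =
      (Real.sqrt Real.pi : ℂ) * (x : ℂ) ^ (1 - 2 * s) / (4 * Complex.Gamma s) *
          Complex.Gamma (s - 1 / 2)
      + (2 : ℂ) ^ ((1 : ℂ) / 2 - s) * (x : ℂ) ^ ((1 : ℂ) / 2 - s) * (Real.pi : ℂ) ^ s /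
          Complex.Gamma s *
          ∑' m : ℕ, (-1 : ℂ) ^ (m + 1) * ((m + 1 : ℝ) : ℂ) ^ (s - 1 / 2) *
            besselK (s - 1 / 2) (Real.pi * x * (m + 1)) := by
  have hΓ : Complex.Gamma s ≠ 0 := Complex.Gamma_ne_zero_of_re_pos (by linarith)
  have hodd := (hasSum_odd hx hs).tsum_eq
  rw [tsum_mul_right] at hodd
  set J : ℤ → ℂ := fun m => ∫ u in Ioi (0 : ℝ), (-1 : ℂ) ^ m * ((u : ℂ) ^ (s - 3 / 2) *
        (Real.exp (-(x ^ 2 * u + (Real.pi * m / 2) ^ 2 / u)) : ℂ)) with hJ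
  have hdual : HasSum J _ := hasSum_dual hx hs
  have hmid : ∫ u in Ioi (0 : ℝ), (u : ℂ) ^ (s - 1) * (Real.exp (-(x ^ 2 * u)) : ℂ) *
        ∑' n : ℕ, (Real.exp (-((2 * n + 1) ^ 2 * u)) : ℂ) =
      (√Real.pi : ℂ) / 4 * ∑' m : ℤ, J m := by
    rw [hdual.tsum_eq, ← integral_const_mul]
    refine setIntegral_congr_fun measurableSet_Ioi fun u hu => ?_
    have hu : 0 < u := hu
    have huC : (u : ℂ) ≠ 0 := by exact_mod_cast hu.ne'
    rw [theta_odd hu, ← tsum_mul_left, ← tsum_mul_left, ← tsum_mul_left]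
    refine tsum_congr fun m => ?_
    rw [neg_add, Real.exp_add, show s - 3 / 2 = (s - 1) + -(1 / 2) by ring,
      Complex.cpow_add _ _ huC]
    push_cast
    ring
  have hJ0 : J 0 = (x : ℂ) ^ (1 - 2 * s) * Complex.Gamma (s - 1 / 2) := by
    have h := integral_cpow_mul_exp (s := s - 1 / 2) (b := x ^ 2)
      (by rw [Complex.sub_re]; norm_num; linarith) (by positivity)
    have e : (1 / ((x ^ 2 : ℝ) : ℂ)) ^ (s - 1 / 2) = (x : ℂ) ^ (1 - 2 * s) := by
      have hxC : (x : ℂ) ≠ 0 := by exact_mod_cast hx.ne'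
      rw [show (1 / ((x ^ 2 : ℝ) : ℂ)) = ((1 / x ^ 2 : ℝ) : ℂ) by push_cast; rfl,
        Complex.cpow_def_of_ne_zero (by exact_mod_cast (by positivity : 1 / x ^ 2 ≠ 0)),
        Complex.cpow_def_of_ne_zero hxC, ← Complex.ofReal_log (by positivity),
        ← Complex.ofReal_log hx.le, one_div, Real.log_inv, Real.log_pow]
      congr 1
      push_cast
      ring
    rw [← e, ← h]
    simp only [hJ]
    refine setIntegral_congr_fun measurableSet_Ioi fun u hu => ?_
    simp only [zpow_zero, one_mul]
    congr 2
    · ring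
    · simp
  have hJneg : ∀ m : ℤ, J (-m) = J m := by
    intro m
    simp only [hJ, zpow_neg, ← inv_zpow, inv_neg, inv_one]
    push_cast
    simp only [mul_neg, neg_div, neg_sq]
  have hJpos : ∀ m : ℕ, (√Real.pi : ℂ) / 2 * J ((m : ℤ) + 1) =
      (2 : ℂ) ^ ((1 : ℂ) / 2 - s) * (x : ℂ) ^ ((1 : ℂ) / 2 - s) * (Real.pi : ℂ) ^ s *
        ((-1 : ℂ) ^ (m + 1) * ((m + 1 : ℝ) : ℂ) ^ (s - 1 / 2) *
          besselK (s - 1 / 2) (Real.pi * x * (m + 1))) := by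
    intro m
    have h := besselK_term hx hs m
    have e : J ((m : ℤ) + 1) = (-1 : ℂ) ^ (m + 1) * ∫ u in Ioi (0 : ℝ), (u : ℂ) ^ (s - 3 / 2) *
        (Real.exp (-(x ^ 2 * u + (Real.pi * (m + 1) / 2) ^ 2 / u)) : ℂ) := by
      simp only [hJ]
      rw [integral_const_mul]
      norm_cast
    rw [e]
    linear_combination -(-1 : ℂ) ^ (m + 1) * h
  have hs1 : Summable fun m : ℕ => J ((m : ℤ) + 1) :=
    hdual.summable.comp_injective fun a b h => by simpa using h
  have hsplit : ∑' m : ℤ, J m = J 0 + 2 * ∑' m : ℕ, J ((m : ℤ) + 1) := by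
    rw [tsum_of_add_one_of_neg_add_one hs1 (by simpa only [hJneg] using hs1)]
    simp only [hJneg]
    ring
  have htail : (√Real.pi : ℂ) / 2 * ∑' m : ℕ, J ((m : ℤ) + 1) =
      (2 : ℂ) ^ ((1 : ℂ) / 2 - s) * (x : ℂ) ^ ((1 : ℂ) / 2 - s) * (Real.pi : ℂ) ^ s *
        ∑' m : ℕ, (-1 : ℂ) ^ (m + 1) * ((m + 1 : ℝ) : ℂ) ^ (s - 1 / 2) *
          besselK (s - 1 / 2) (Real.pi * x * (m + 1)) := by
    rw [← tsum_mul_left, ← tsum_mul_left]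
    exact tsum_congr hJpos
  rw [hmid, hsplit, hJ0] at hodd
  rw [div_mul_eq_mul_div _ _ (∑' m : ℕ, _), ← htail, eq_comm, ← mul_left_inj' hΓ, hodd]
  field_simp
  ring
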